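/- arXiv:1510.06700 — 2 statements merged into one kernel-verified Lean document; each statement's English description precedes it below -/
import Mathlib

section
/- Let F ⊆ {0,1}^n be defined by a constraint family ((V_j, Q_j))_{j∈J} in which every constraint relation Q_j is OR-free. Then the diameter of every connected component of the solution graph G(F) is at most 2n: whenever a, b ∈ F are connected in G(F), d_F(a,b) ≤ 2n. -/
/-- Coordinatewise majority operation on `Bool`. -/
def maj (x y z : Bool) : Bool := (x && y) || (y && z) || (z && x)

/-- One step in the solution graph of `R`: both endpoints are solutions and
they differ in exactly one coordinate. -/
def stepR {ι : Type*} [Fintype ι] [DecidableEq ι] (R : Set (ι → Bool))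
    (a b : ι → Bool) : Prop :=
  a ∈ R ∧ b ∈ R ∧ hammingDist a b = 1

/-- `a` and `b` are connected in the solution graph of `R`. -/
def connIn {ι : Type*} [Fintype ι] [DecidableEq ι] (R : Set (ι → Bool)) :
    (ι → Bool) → (ι → Bool) → Prop :=
  Relation.ReflTransGen (stepR R)

/-- There is a path of length `k` from `a` to `b` in the solution graph of `R`. -/
def hasPathLen {ι : Type*} [Fintype ι] [DecidableEq ι] (R : Set (ι → Bool)) :
    ℕ → (ι → Bool) → (ι → Bool) → Prop
  | 0, a, b => a = b
  | k + 1, a, b => ∃ c, stepR R a c ∧ hasPathLen R k c b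

/-- Shortest-path distance in the solution graph of `R`. -/
noncomputable def distIn {ι : Type*} [Fintype ι] [DecidableEq ι] (R : Set (ι → Bool))
    (a b : ι → Bool) : ℕ :=
  sInf {k | hasPathLen R k a b}

/-- The relation on `{0,1}^n` defined by a constraint family `((V j, Q j))_j`. -/
def famSet {n : ℕ} {J : Type*} (V : J → Finset (Fin n))
    (Q : ∀ j, Set ({i // i ∈ V j} → Bool)) : Set (Fin n → Bool) :=
  {a | ∀ j, (fun i : {i // i ∈ V j} => a i.1) ∈ Q j}

/-- `Q` is OR-free: the binary relation OR = {01, 10, 11} cannot be obtained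
from `Q` by substituting constants at all remaining coordinates. -/
def orFree {ι : Type*} [DecidableEq ι] (Q : Set (ι → Bool)) : Prop :=
  ¬ ∃ (i j : ι) (t : ι → Bool), i ≠ j ∧
      ∀ x y : Bool,
        (Function.update (Function.update t i x) j y ∈ Q ↔ (x || y) = true)


/-- Downward step in the solution graph. -/
def downR {n : ℕ} (F : Set (Fin n → Bool)) (a b : Fin n → Bool) : Prop :=
  a ∈ F ∧ b ∈ F ∧ ∃ i, a i = true ∧ b = Function.update a i false

theorem famSet_down {n : ℕ} {J : Type*}
    (V : J → Finset (Fin n)) (Q : ∀ j, Set ({i // i ∈ V j} → Bool))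
    (hQ : ∀ j, orFree (Q j)) (a : Fin n → Bool) (i k : Fin n) (hik : i ≠ k)
    (ha : a ∈ famSet V Q) (hai : a i = true) (hak : a k = true)
    (h1 : Function.update a i false ∈ famSet V Q)
    (h2 : Function.update a k false ∈ famSet V Q) :
    Function.update (Function.update a i false) k false ∈ famSet V Q := by
  intro j
  by_contra hcon
  by_cases hi : i ∈ V j
  · by_cases hk : k ∈ V j
    · apply hQ j
      refine ⟨⟨i, hi⟩, ⟨k, hk⟩, fun l => a l.1, by simpa using hik, ?_⟩
      have key : ∀ x y : Bool, Function.update (Function.update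
          (fun l : {l // l ∈ V j} => a l.1) ⟨i, hi⟩ x) ⟨k, hk⟩ y =
          fun l : {l // l ∈ V j} => Function.update (Function.update a i x) k y l.1 := by
        intro x y
        funext l
        simp only [Function.update_apply, Subtype.ext_iff]
      intro x y
      rw [key]
      have e1 : Function.update a i true = a := by rw [← hai]; simp
      have e2 : Function.update a k true = a := by rw [← hak]; simp
      have e3 : Function.update (Function.update a i false) k true
          = Function.update a i false := by
        rw [Function.update_comm hik, e2]
      cases x <;> cases y
      · simpa using hcon
      · simpa [e3] using h1 j
      · simpa [e1] using h2 j
      · simpa [e1, e2] using ha j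
    · apply hcon
      convert h1 j using 1
      funext l
      have : l.1 ≠ k := fun h => hk (h ▸ l.2)
      simp [Function.update_apply, this]
  · apply hcon
    convert h2 j using 1
    funext l
    have : l.1 ≠ i := fun h => hi (h ▸ l.2)
    simp [Function.update_apply, this]

theorem stepR_symm {n : ℕ} {F : Set (Fin n → Bool)} {a b : Fin n → Bool}
    (h : stepR F a b) : stepR F b a :=
  ⟨h.2.1, h.1, by rw [hammingDist_comm]; exact h.2.2⟩

theorem stepR_down {n : ℕ} {F : Set (Fin n → Bool)} {a b : Fin n → Bool}
    (h : stepR F a b) : downR F a b ∨ downR F b a := by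
  obtain ⟨ha, hb, h⟩ := h
  obtain ⟨i, hi⟩ := Finset.card_eq_one.1 h
  have hd : ∀ l, a l ≠ b l ↔ l = i := by
    intro l
    have := Finset.ext_iff.1 hi l
    simpa using this
  have hii := (hd i).2 rfl
  have hne : ∀ l, l ≠ i → a l = b l := fun l hl => by
    by_contra hc
    exact hl ((hd l).1 hc)
  cases hai : a i
  · right
    refine ⟨hb, ha, i, by rw [hai] at hii; simpa using hii.symm, ?_⟩
    funext l
    by_cases hl : l = i
    · subst hl; simp [hai]
    · simp [hl, hne l hl]
  · left
    refine ⟨ha, hb, i, hai, ?_⟩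
    funext l
    by_cases hl : l = i
    · subst hl; rw [hai] at hii; simpa using hii.symm
    · simp [hl, hne l hl]

theorem down_stepR {n : ℕ} {F : Set (Fin n → Bool)} {a b : Fin n → Bool}
    (h : downR F a b) : stepR F a b := by
  obtain ⟨ha, hb, i, hi, rfl⟩ := h
  refine ⟨ha, hb, Finset.card_eq_one.2 ⟨i, ?_⟩⟩
  ext l
  by_cases hl : l = i
  · subst hl; simp [hi]
  · simp [hl]

theorem down_card {n : ℕ} {F : Set (Fin n → Bool)} {a b : Fin n → Bool}
    (h : downR F a b) : (Finset.univ.filter fun i => b i = true).card + 1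
      = (Finset.univ.filter fun i => a i = true).card := by
  obtain ⟨ha, hb, i, hi, rfl⟩ := h
  rw [← Finset.card_erase_add_one (s := Finset.univ.filter fun i => a i = true) (a := i)
    (by simpa using hi)]
  congr 2
  ext l
  by_cases hl : l = i
  · subst hl; simp
  · simp [hl]

theorem hasPathLen_trans {n : ℕ} {F : Set (Fin n → Bool)} {k m : ℕ} {a b c : Fin n → Bool}
    (h : hasPathLen F k a b) (h' : hasPathLen F m b c) : hasPathLen F (k + m) a c := by
  induction k generalizing a with
  | zero => cases h; simpa using h'
  | succ k ih =>
    obtain ⟨d, hd, hdb⟩ := h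
    rw [Nat.succ_add]
    exact ⟨d, hd, ih hdb⟩

theorem down_path {n : ℕ} {F : Set (Fin n → Bool)} {a b : Fin n → Bool}
    (h : Relation.ReflTransGen (downR F) a b) :
    ∃ k, hasPathLen F k a b ∧ hasPathLen F k b a ∧
      k + (Finset.univ.filter fun i => b i = true).card
        = (Finset.univ.filter fun i => a i = true).card := by
  induction h with
  | refl => exact ⟨0, rfl, rfl, by simp⟩
  | tail _ hbc ih =>
    obtain ⟨k, h1, h2, h3⟩ := ih
    have hs := down_stepR hbc
    have hc := down_card hbc
    exact ⟨k + 1, hasPathLen_trans (m := 1) h1 ⟨_, hs, rfl⟩, ⟨_, stepR_symm hs, h2⟩, by omega⟩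

/-- If every constraint relation is OR-free, the diameter of every connected
component of the solution graph of the defined relation is at most `2 * n`. -/
theorem stmt3 {n : ℕ} {J : Type*} [Fintype J]
    (V : J → Finset (Fin n)) (Q : ∀ j, Set ({i // i ∈ V j} → Bool))
    (hQ : ∀ j, orFree (Q j)) :
    ∀ a ∈ famSet V Q, ∀ b ∈ famSet V Q, connIn (famSet V Q) a b →
      distIn (famSet V Q) a b ≤ 2 * n := by
  intro a _ b _ hab
  have cr : ∀ a b c, downR (famSet V Q) a b → downR (famSet V Q) a c →
      ∃ d, Relation.ReflGen (downR (famSet V Q)) b d ∧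
        Relation.ReflTransGen (downR (famSet V Q)) c d := by
    rintro a b c ⟨ha, hb, i, hi, rfl⟩ ⟨-, hc, k, hk, rfl⟩
    by_cases hik : i = k
    · subst hik
      exact ⟨_, .refl, .refl⟩
    · have hd := famSet_down V Q hQ a i k hik ha hi hk hb hc
      refine ⟨_, .single ⟨hb, hd, k, ?_, rfl⟩, .single ⟨hc, hd, i, ?_, ?_⟩⟩
      · simpa [Function.update_apply, Ne.symm hik] using hk
      · simpa [Function.update_apply, hik] using hi
      · rw [Function.update_comm hik]
  have hJ : Relation.Join (Relation.ReflTransGen (downR (famSet V Q))) a b := by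
    have heq := Relation.equivalence_join_reflTransGen cr
    induction hab with
    | refl => exact heq.refl _
    | tail _ hbc ih =>
      refine heq.trans (ih hbc.1) ?_
      rcases stepR_down hbc with h | h
      · exact ⟨_, .single h, .refl⟩
      · exact ⟨_, .refl, .single h⟩
  obtain ⟨c, hac, hbc⟩ := hJ
  obtain ⟨k, hk, -, hk'⟩ := down_path hac
  obtain ⟨m, -, hm, hm'⟩ := down_path hbc
  have hle : distIn (famSet V Q) a b ≤ k + m := Nat.sInf_le (hasPathLen_trans hk hm)
  have c1 := Finset.card_le_univ (Finset.univ.filter fun i => a i = true)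
  have c2 := Finset.card_le_univ (Finset.univ.filter fun i => b i = true)
  rw [Fintype.card_fin] at c1 c2
  omega
end

section
/- Let F ⊆ {0,1}^n be defined by a constraint family ((V_j, Q_j))_{j∈J} in which every constraint relation Q_j is closed under the coordinatewise application of the ternary operation (x,y,z) ↦ x ∧ (y ∨ z) (each Q_j is IHSB−). Then for any two distinct connected components A and B of the solution graph G(F), there exists j ∈ J such that the images of A and B under restriction to V_j are disconnected in the solution graph of the projection π_j(F) = {a|_{V_j} : a ∈ F}: no element of {a|_{V_j} : a ∈ A} is connected to an element of {b|_{V_j} : b ∈ B} in G(π_j(F)). -/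
/-- The projection of the defined relation to the scope of the `j`-th
constraint. -/
def projSet {n : ℕ} {J : Type*} (V : J → Finset (Fin n))
    (Q : ∀ j, Set ({i // i ∈ V j} → Bool)) (j : J) :
    Set ({i // i ∈ V j} → Bool) :=
  {x | ∃ c ∈ famSet V Q, x = fun i : {i // i ∈ V j} => c i.1}

theorem stepR_symm' {ι : Type*} [Fintype ι] [DecidableEq ι] {R : Set (ι → Bool)}
    {a b : ι → Bool} (h : stepR R a b) : stepR R b a :=
  ⟨h.2.1, h.1, by rw [hammingDist_comm]; exact h.2.2⟩

theorem connIn_symm' {ι : Type*} [Fintype ι] [DecidableEq ι] {R : Set (ι → Bool)}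
    {a b : ι → Bool} (h : connIn R a b) : connIn R b a := by
  induction h with
  | refl => exact Relation.ReflTransGen.refl
  | tail _ h2 ih => exact Relation.ReflTransGen.head (stepR_symm' h2) ih

theorem connIn_mem' {ι : Type*} [Fintype ι] [DecidableEq ι] {R : Set (ι → Bool)}
    {a b : ι → Bool} (ha : a ∈ R) (h : connIn R a b) : b ∈ R := by
  induction h with
  | refl => exact ha
  | tail _ h2 _ => exact h2.2.1

theorem connIn_const {ι : Type*} [Fintype ι] [DecidableEq ι] {R : Set (ι → Bool)}
    {p q : ι} (hpq : p ≠ q) (hR : ∀ c ∈ R, c p = c q)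
    {a b : ι → Bool} (h : connIn R a b) : a p = b p := by
  induction h with
  | refl => rfl
  | @tail c d _ h2 ih =>
    rw [ih]
    by_contra hne
    obtain ⟨hc, hd, h1⟩ := h2
    have hq : c q ≠ d q := by rw [← hR c hc, ← hR d hd]; exact hne
    have : 1 < hammingDist c d := by
      unfold hammingDist
      rw [Finset.one_lt_card]
      exact ⟨p, by simpa using hne, q, by simpa using hq, hpq⟩
    omega

/-- Every component contains a local minimum. -/
theorem exists_locmin {ι : Type*} [Fintype ι] [DecidableEq ι] {R : Set (ι → Bool)}
    {a : ι → Bool} (ha : a ∈ R) :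
    ∃ m, connIn R a m ∧ ∀ i, m i = true → Function.update m i false ∉ R := by
  obtain ⟨m, hm, hmin⟩ := (Set.toFinite {c | connIn R a c}).exists_minimal
    ⟨a, Relation.ReflTransGen.refl⟩
  refine ⟨m, hm, fun i hi hR => ?_⟩
  have hs : stepR R m (Function.update m i false) := by
    refine ⟨connIn_mem' ha hm, hR, ?_⟩
    unfold hammingDist
    rw [Finset.card_eq_one]
    refine ⟨i, ?_⟩
    ext k
    by_cases hk : k = i
    · subst hk; simp [hi]
    · simp [hk]
  have hle : Function.update m i false ≤ m := by
    intro k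
    by_cases hk : k = i
    · subst hk; simp
    · simp [hk]
  have h := hmin (Relation.ReflTransGen.tail hm hs) hle i
  simp only [hi, Function.update_self] at h
  exact Bool.noConfusion (h rfl)

theorem exists_pred {ι : Type*} [Fintype ι] [DecidableEq ι] {R : Set (ι → Bool)}
    (hR : ∀ a ∈ R, ∀ b ∈ R, ∀ c ∈ R, (fun i => a i && (b i || c i)) ∈ R)
    {m b : ι → Bool} (hm : m ∈ R) (hb : b ∈ R) {i : ι} (hbi : b i = false)
    (hf : Function.update m i false ∉ R) :
    ∃ k, k ≠ i ∧ m k = true ∧ ∀ c ∈ R, c k = true → c i = true := by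
  by_contra hcon
  push Not at hcon
  have key : ∀ T : Finset ι, (∀ k ∈ T, k ≠ i ∧ m k = true) →
      ∃ d ∈ R, d i = false ∧ (∀ k, d k = true → m k = true) ∧ ∀ k ∈ T, d k = true := by
    intro T
    induction T using Finset.induction_on with
    | empty =>
      intro _
      exact ⟨_, hR m hm b hb b hb, by simp [hbi], by simp +contextual, by simp⟩
    | insert k T _ ih =>
      intro hT
      obtain ⟨d, hd, hdi, _, hdT⟩ := ih (fun l hl => hT l (Finset.mem_insert_of_mem hl))
      obtain ⟨hki, hmk⟩ := hT k (Finset.mem_insert_self _ _)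
      obtain ⟨c, hc, hck, hci⟩ := hcon k hki hmk
      refine ⟨_, hR m hm d hd c hc, ?_, by simp +contextual, ?_⟩
      · simp [hdi, hci]
      · intro l hl
        have hml := (hT l hl).2
        rcases Finset.mem_insert.1 hl with rfl | h
        · simp [hml, hck]
        · simp [hml, hdT l h]
  obtain ⟨d, hd, hdi, hdm, hdT⟩ := key (Finset.univ.filter fun k => k ≠ i ∧ m k = true)
    (by simp)
  apply hf
  convert hd using 1
  funext k
  by_cases hk : k = i
  · subst hk; simp [hdi]
  · rw [Function.update_of_ne hk]
    cases hmk : m k with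
    | true => exact (hdT k (by simp [hk, hmk])).symm
    | false =>
      cases hdk : d k with
      | false => rfl
      | true => rw [hdm k hdk] at hmk; exact hmk.symm

theorem exists_equal_pair {n : ℕ} {J : Type*}
    (V : J → Finset (Fin n)) (Q : ∀ j, Set ({i // i ∈ V j} → Bool))
    (hQ : ∀ j, ∀ a ∈ Q j, ∀ b ∈ Q j, ∀ c ∈ Q j,
      (fun i => a i && (b i || c i)) ∈ Q j)
    (a b : Fin n → Bool) (ha : a ∈ famSet V Q) (hb : b ∈ famSet V Q)
    (hmin : ∀ i, a i = true → Function.update a i false ∉ famSet V Q)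
    {i₀ : Fin n} (h1 : a i₀ = true) (h0 : b i₀ = false) :
    ∃ j, ∃ p ∈ V j, ∃ q ∈ V j, p ≠ q ∧ (∀ c ∈ famSet V Q, c p = c q) ∧ a p ≠ b p := by
  obtain ⟨i, hi, himin⟩ := (Set.toFinite {i | a i = true ∧ b i = false}).exists_minimalFor
    (fun p => {c | c ∈ famSet V Q ∧ c p = true}) _ ⟨i₀, h1, h0⟩
  obtain ⟨hai, hbi⟩ := hi
  have hf := hmin i hai
  simp only [famSet, Set.mem_ofPred_eq, not_forall] at hf
  obtain ⟨j, hj⟩ := hf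
  have hij : i ∈ V j := by
    by_contra hij
    apply hj
    convert ha j using 1
    funext k
    have hki : k.1 ≠ i := fun h => hij (h ▸ k.2)
    exact Function.update_of_ne hki _ _
  obtain ⟨⟨k, hkj⟩, hki, hak, himp⟩ := exists_pred (hQ j) (ha j) (hb j) (i := ⟨i, hij⟩) hbi
    (by
      convert hj using 2
      funext k
      by_cases hk : k = ⟨i, hij⟩
      · subst hk; simp
      · have : k.1 ≠ i := fun h => hk (Subtype.ext h)
        simp [hk, this])
  have himp' : ∀ c ∈ famSet V Q, c k = true → c i = true := fun c hc h => himp _ (hc j) h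
  have hbk : b k = false := by
    by_contra h
    have := himp' b hb (by simpa using h)
    simp [hbi] at this
  have hsub := himin (j := k) ⟨hak, hbk⟩ (fun c hc => ⟨hc.1, himp' c hc.1 hc.2⟩)
  refine ⟨j, i, hij, k, hkj, fun h => hki (Subtype.ext h.symm), fun c hc => ?_, by simp [hai, hbi]⟩
  rw [Bool.eq_iff_iff]
  exact ⟨fun h => (hsub (show c ∈ {c | c ∈ famSet V Q ∧ c i = true} from ⟨hc, h⟩)).2,
    himp' c hc⟩

/-- If every constraint relation is IHSB− (closed under the coordinatewise
operation `(x, y, z) ↦ x ∧ (y ∨ z)`), then for any two distinct connected components `A`, `B` of the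
solution graph of the defined relation (given by representatives `a`, `b`),
there is a constraint whose projection disconnects them: no restriction of an
element of `A` is connected to a restriction of an element of `B` in the
solution graph of the projection. -/
theorem stmt18 {n : ℕ} {J : Type*} [Fintype J]
    (V : J → Finset (Fin n)) (Q : ∀ j, Set ({i // i ∈ V j} → Bool))
    (hQ : ∀ j, ∀ a ∈ Q j, ∀ b ∈ Q j, ∀ c ∈ Q j,
      (fun i => a i && (b i || c i)) ∈ Q j)
    (a b : Fin n → Bool) (ha : a ∈ famSet V Q) (hb : b ∈ famSet V Q)
    (hdisc : ¬ connIn (famSet V Q) a b) :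
    ∃ j, ∀ a' b', a' ∈ famSet V Q → connIn (famSet V Q) a a' →
      b' ∈ famSet V Q → connIn (famSet V Q) b b' →
      ¬ connIn (projSet V Q j)
          (fun i : {i // i ∈ V j} => a' i.1)
          (fun i : {i // i ∈ V j} => b' i.1) := by
  obtain ⟨mA, hA, hAmin⟩ := exists_locmin ha
  obtain ⟨mB, hB, hBmin⟩ := exists_locmin hb
  have hAm := connIn_mem' ha hA
  have hBm := connIn_mem' hb hB
  have hne : mA ≠ mB := by
    rintro rfl
    exact hdisc (Relation.ReflTransGen.trans hA (connIn_symm' hB))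
  obtain ⟨i, hi⟩ := Function.ne_iff.1 hne
  have key : ∃ j, ∃ p ∈ V j, ∃ q ∈ V j, p ≠ q ∧ (∀ c ∈ famSet V Q, c p = c q) ∧
      mA p ≠ mB p := by
    cases h1 : mA i with
    | true =>
      refine exists_equal_pair V Q hQ mA mB hAm hBm hAmin h1 ?_
      cases h2 : mB i
      · rfl
      · exact absurd (h1.trans h2.symm) hi
    | false =>
      have h2 : mB i = true := by
        cases h2 : mB i
        · exact absurd (h1.trans h2.symm) hi
        · rfl
      obtain ⟨j, p, hp, q, hq, h3, h4, h5⟩ := exists_equal_pair V Q hQ mB mA hBm hAm hBmin h2 h1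
      exact ⟨j, p, hp, q, hq, h3, h4, h5.symm⟩
  obtain ⟨j, p, hp, q, hq, hpq, heq, hd⟩ := key
  refine ⟨j, fun a' b' _ haa' _ hbb' hconn => hd ?_⟩
  have e1 := connIn_const hpq heq hA
  have e2 := connIn_const hpq heq hB
  have e3 := connIn_const hpq heq haa'
  have e4 := connIn_const hpq heq hbb'
  have e5 : a' p = b' p := connIn_const (p := (⟨p, hp⟩ : {i // i ∈ V j})) (q := ⟨q, hq⟩)
    (fun h => hpq (congrArg Subtype.val h))
    (by rintro _ ⟨c, hc, rfl⟩; exact heq c hc) hconn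
  rw [← e1, ← e2, e3, e4, e5]
end
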